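/- Let h and k be natural numbers, let G be a simple graph with no K_h minor, let X, Y ⊆ V(G), and suppose G contains k pairwise disjoint X-Y-paths. Then G contains at least k/(2(h−1)) pairwise non-adjacent X-Y-paths. -/

import Mathlib

open SimpleGraph

universe u

variable {V : Type u}

/-- A packaged walk in `G`: a pair of endpoints together with a walk between them. -/
abbrev PathPkg (G : SimpleGraph V) : Type u := Σ x : V, Σ y : V, G.Walk x y

/-- The set of vertices of a packaged walk. -/
def pkgSupport {G : SimpleGraph V} (p : PathPkg G) : Set V := {x | x ∈ p.2.2.support}

/-- The set of edges of a packaged walk. -/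
def pkgEdges {G : SimpleGraph V} (p : PathPkg G) : Set (Sym2 V) := {e | e ∈ p.2.2.edges}

/-- `p` is an `X`-`Y`-path: a path whose first endpoint lies in `X` and whose
second endpoint lies in `Y`. -/
def IsXYPath (G : SimpleGraph V) (X Y : Set V) (p : PathPkg G) : Prop :=
  p.2.2.IsPath ∧ p.1 ∈ X ∧ p.2.1 ∈ Y

/-- Two packaged walks are (vertex-)disjoint. -/
def PkgDisjoint {G : SimpleGraph V} (p q : PathPkg G) : Prop :=
  ∀ x, x ∈ pkgSupport p → x ∉ pkgSupport q

/-- Two packaged walks are non-adjacent: they are vertex-disjoint and no edge of `G`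
joins a vertex of one to a vertex of the other. -/
def PkgNonAdj (G : SimpleGraph V) (p q : PathPkg G) : Prop :=
  ∀ a, a ∈ pkgSupport p → ∀ b, b ∈ pkgSupport q → a ≠ b ∧ ¬ G.Adj a b

/-- `Z` separates `X` and `Y` in `G`: every `X`-`Y`-path meets `Z`. -/
def XYSeparates (G : SimpleGraph V) (X Y Z : Set V) : Prop :=
  ∀ p : PathPkg G, IsXYPath G X Y p → ∃ z, z ∈ Z ∧ z ∈ pkgSupport p

/-- `M` is an induced matching of `G`: a set of edges of `G` such that any two distinct
edges of `M` are at distance at least `2` in `G` (no endpoint of one equals or is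
adjacent to an endpoint of the other). -/
def IsInducedMatching (G : SimpleGraph V) (M : Set (Sym2 V)) : Prop :=
  M ⊆ G.edgeSet ∧
    ∀ e₁, e₁ ∈ M → ∀ e₂, e₂ ∈ M → e₁ ≠ e₂ →
      ∀ a, a ∈ e₁ → ∀ b, b ∈ e₂ → a ≠ b ∧ ¬ G.Adj a b

/-- `G` admits a partition of its edge set into `n` induced matchings
(a strong edge colouring with `n` colours). -/
def HasStrongEdgeColoring (G : SimpleGraph V) (n : ℕ) : Prop :=
  ∃ M : Fin n → Set (Sym2 V),
    (∀ i, IsInducedMatching G (M i)) ∧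
    (Pairwise fun i j => Disjoint (M i) (M j)) ∧
    (⋃ i, M i) = G.edgeSet

/-- The strong chromatic index of `G`: the least number of induced matchings into
which the edge set of `G` can be partitioned. -/
noncomputable def strongChromaticIndex (G : SimpleGraph V) : ℕ :=
  sInf {n | HasStrongEdgeColoring G n}

/-- `G` contains the complete graph `K_r` as a topological minor: there are `r` distinct
branch vertices joined pairwise by internally disjoint paths whose internal vertices
avoid all branch vertices. -/
def HasTopKMinor (G : SimpleGraph V) (r : ℕ) : Prop :=
  ∃ (f : Fin r → V) (P : (i j : Fin r) → i < j → G.Walk (f i) (f j)),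
    Function.Injective f ∧
    (∀ i j hij, (P i j hij).IsPath) ∧
    (∀ i j hij x, x ∈ (P i j hij).support → x ≠ f i → x ≠ f j → ∀ l, x ≠ f l) ∧
    (∀ i j hij i' j' hij', (i, j) ≠ (i', j') →
      ∀ x, x ∈ (P i j hij).support → x ∈ (P i' j' hij').support →
        (x = f i ∨ x = f j) ∧ (x = f i' ∨ x = f j'))

/-- `G` contains the complete graph `K_n` as a minor, witnessed by `n` nonempty,
pairwise disjoint, connected branch sets joined pairwise by edges. -/
def HasKMinor (G : SimpleGraph V) (n : ℕ) : Prop :=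
  ∃ B : Fin n → Set V,
    (∀ i, (B i).Nonempty) ∧
    (∀ i, (G.induce (B i)).Connected) ∧
    (Pairwise fun i j => Disjoint (B i) (B j)) ∧
    (∀ i j, i ≠ j → ∃ a ∈ B i, ∃ b ∈ B j, G.Adj a b)

/-- Two connected sets joined by an edge have connected union. -/
lemma conn_union_adj {G : SimpleGraph V} {s t : Set V} (hs : (G.induce s).Connected)
    (ht : (G.induce t).Connected) {a b : V} (ha : a ∈ s) (hb : b ∈ t) (hab : G.Adj a b) :
    (G.induce (s ∪ t)).Connected := by
  have h1 := induce_union_connected hs.preconnected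
    (induce_pair_connected_of_adj hab).preconnected ⟨a, ha, by simp⟩
  have h2 := induce_union_connected h1.preconnected ht.preconnected ⟨b, by simp, hb⟩
  have e : s ∪ {a, b} ∪ t = s ∪ t := by
    ext x
    simp only [Set.mem_union, Set.mem_insert_iff, Set.mem_singleton_iff]
    constructor
    · rintro ((h | rfl | rfl) | h) <;> tauto
    · tauto
  rwa [e] at h2

/-- The union of the sets indexed by `A`. -/
def unionOf {k : ℕ} (s : Fin k → Set V) (A : Finset (Fin k)) : Set V :=
  {x | ∃ i ∈ A, x ∈ s i}

/-- Two sets are joined by an edge. -/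
def Touch (G : SimpleGraph V) (s t : Set V) : Prop := ∃ a ∈ s, ∃ b ∈ t, G.Adj a b

lemma Touch.symm {G : SimpleGraph V} {s t : Set V} (h : Touch G s t) : Touch G t s := by
  obtain ⟨a, ha, b, hb, hab⟩ := h
  exact ⟨b, hb, a, ha, hab.symm⟩

/-- A complete minor whose branch sets are unions of sets indexed by `A`. -/
def KMinorIn {k : ℕ} (G : SimpleGraph V) (s : Fin k → Set V) (A : Finset (Fin k)) (n : ℕ) :
    Prop :=
  ∃ B : Fin n → Finset (Fin k),
    (∀ i, (B i).Nonempty) ∧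
    (∀ i, (G.induce (unionOf s (B i))).Connected) ∧
    (Pairwise fun i j => Disjoint (B i) (B j)) ∧
    (∀ i j, i ≠ j → Touch G (unionOf s (B i)) (unionOf s (B j))) ∧ ∀ i, B i ⊆ A

lemma KMinorIn.mono {k : ℕ} {G : SimpleGraph V} {s : Fin k → Set V} {A A' : Finset (Fin k)}
    {n : ℕ} (h : KMinorIn G s A n) (hA : A ⊆ A') : KMinorIn G s A' n := by
  obtain ⟨B, h1, h2, h3, h4, h5⟩ := h
  exact ⟨B, h1, h2, h3, h4, fun i => (h5 i).trans hA⟩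

/-- The Duchet–Meyniel bound for a family of disjoint connected sets. -/
lemma duchet_meyniel {k : ℕ} (G : SimpleGraph V) (s : Fin k → Set V)
    (hc : ∀ i, (G.induce (s i)).Connected) :
    ∀ (N : ℕ) (A : Finset (Fin k)) (m : ℕ), A.card ≤ N →
      ¬ KMinorIn G s A (m + 1) →
      ∃ S ⊆ A, (∀ i ∈ S, ∀ j ∈ S, i ≠ j → ¬ Touch G (s i) (s j)) ∧
        A.card ≤ 2 * m * S.card := by
  classical
  intro N
  induction N with
  | zero =>
    intro A m hA _
    exact ⟨∅, by simp, by simp, by simpa using hA⟩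
  | succ N ih =>
    intro A m hA hm
    rcases A.eq_empty_or_nonempty with rfl | ⟨i0, hi0⟩
    · exact ⟨∅, by simp, by simp, by simp⟩
    -- candidate pairs
    let good : Finset (Fin k) → Prop := fun D => D ⊆ A ∧ D.Nonempty ∧
      (G.induce (unionOf s D)).Connected ∧
      ∃ S ⊆ D, (∀ i ∈ S, ∀ j ∈ S, i ≠ j → ¬ Touch G (s i) (s j)) ∧ D.card ≤ 2 * S.card
    have hsing : ∀ i, unionOf s {i} = s i := by
      intro i; ext x; simp [unionOf]
    have hgood0 : good {i0} := by
      refine ⟨by simpa using hi0, by simp, ?_, {i0}, by simp, ?_, by simp⟩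
      · rw [hsing]; exact hc i0
      · intro i hi j hj hij
        simp at hi hj
        exact absurd (hi.trans hj.symm) hij
    obtain ⟨D, hDg, hDmax⟩ : ∃ D, good D ∧ ∀ D', good D' → D'.card ≤ D.card := by
      obtain ⟨D, hD, hmax⟩ := Finset.exists_max_image
        (Finset.univ.filter good) Finset.card ⟨{i0}, by simpa using hgood0⟩
      exact ⟨D, by simpa using hD, fun D' h' => hmax D' (by simpa using h')⟩
    obtain ⟨hDA, hDne, hDc, S, hSD, hSi, hSc⟩ := hDg
    have hDpos : 0 < D.card := hDne.card_pos
    have hcardsub := Finset.card_sdiff_add_card_eq_card hDA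
    by_cases hdom : ∀ v ∈ A \ D, Touch G (s v) (unionOf s D)
    · cases m with
      | zero =>
        exfalso
        apply hm
        refine ⟨fun _ => {i0}, by simp, ?_, ?_, ?_, by simpa using hi0⟩
        · intro _; rw [hsing]; exact hc i0
        · intro i j hij; exact absurd (Subsingleton.elim (α := Fin 1) i j) hij
        · intro i j hij; exact absurd (Subsingleton.elim (α := Fin 1) i j) hij
      | succ m =>
        obtain ⟨S', hS'A, hS'i, hS'c⟩ := ih (A \ D) m (by omega) (by
          intro hmin
          apply hm
          obtain ⟨B, h1, h2, h3, h4, h5⟩ := hmin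
          have hdj : ∀ i, Disjoint D (B i) := fun i =>
            Finset.disjoint_left.2 fun a ha hb => (Finset.mem_sdiff.1 (h5 i hb)).2 ha
          have htouch : ∀ i, Touch G (unionOf s D) (unionOf s (B i)) := by
            intro i
            obtain ⟨v, hv⟩ := h1 i
            obtain ⟨a, ha, b, hb, hab⟩ := hdom v (h5 i hv)
            exact ⟨b, hb, a, ⟨v, hv, ha⟩, hab.symm⟩
          refine ⟨Fin.cons D B, ?_, ?_, ?_, ?_, ?_⟩
          · intro i
            cases i using Fin.cases with
            | zero => simpa using hDne
            | succ i => simpa using h1 i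
          · intro i
            cases i using Fin.cases with
            | zero => exact hDc
            | succ i => exact h2 i
          · intro i j hij
            cases i using Fin.cases with
            | zero =>
              cases j using Fin.cases with
              | zero => exact absurd rfl hij
              | succ j => simpa using hdj j
            | succ i =>
              cases j using Fin.cases with
              | zero => simpa using (hdj i).symm
              | succ j => simpa using h3 (fun e => hij (by rw [e]) : i ≠ j)
          · intro i j hij
            cases i using Fin.cases with
            | zero =>
              cases j using Fin.cases with
              | zero => exact absurd rfl hij
              | succ j => simpa using htouch j
            | succ i =>
              cases j using Fin.cases with
              | zero => simpa using (htouch i).symm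
              | succ j => simpa using h4 i j (fun e => hij (by rw [e]))
          · intro i
            cases i using Fin.cases with
            | zero => simpa using hDA
            | succ i => simpa using (h5 i).trans Finset.sdiff_subset)
        rcases le_total S.card S'.card with hle | hle
        · refine ⟨S', hS'A.trans Finset.sdiff_subset, hS'i, ?_⟩
          nlinarith
        · refine ⟨S, hSD.trans hDA, hSi, ?_⟩
          have : 2 * m * S'.card ≤ 2 * m * S.card := Nat.mul_le_mul_left _ hle
          nlinarith
    · push Not at hdom
      obtain ⟨w, hwAD, hw⟩ := hdom
      obtain ⟨hwA, hwD⟩ := Finset.mem_sdiff.1 hwAD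
      -- the closed neighbourhood of D
      let M : Finset (Fin k) := A.filter fun v => v ∈ D ∨ Touch G (s v) (unionOf s D)
      have hMA : M ⊆ A := Finset.filter_subset _ _
      have hDM : D ⊆ M := fun v hv => Finset.mem_filter.2 ⟨hDA hv, Or.inl hv⟩
      have hwM : w ∉ M := fun hh => by
        rcases (Finset.mem_filter.1 hh).2 with h' | h'
        · exact hwD h'
        · exact hw h'
      have hcardM := Finset.card_sdiff_add_card_eq_card hMA
      have hMpos : 0 < M.card := (hDne.mono hDM).card_pos
      have hRpos : 0 < (A \ M).card :=
        Finset.card_pos.2 ⟨w, Finset.mem_sdiff.2 ⟨hwA, hwM⟩⟩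
      -- no edges leave M inside A
      have hsep : ∀ u ∈ M, ∀ v ∈ A \ M, ¬ Touch G (s u) (s v) := by
        intro u hu v hv huv
        obtain ⟨hvA, hvM⟩ := Finset.mem_sdiff.1 hv
        have hvD : v ∉ D := fun hh => hvM (hDM hh)
        have hvT : ¬ Touch G (s v) (unionOf s D) := fun hh =>
          hvM (Finset.mem_filter.2 ⟨hvA, Or.inr hh⟩)
        have huD : u ∉ D := by
          intro hh
          obtain ⟨a, ha, b, hb, hab⟩ := huv
          exact hvT ⟨b, hb, a, ⟨u, hh, ha⟩, hab.symm⟩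
        have huT : Touch G (s u) (unionOf s D) :=
          ((Finset.mem_filter.1 hu).2).resolve_left huD
        have huv' : u ≠ v := by
          rintro rfl
          exact hvM hu
        have huni : unionOf s (insert v (insert u D)) = (unionOf s D ∪ s u) ∪ s v := by
          ext x
          simp only [unionOf, Finset.mem_insert, Set.mem_union, Set.mem_ofPred_eq]
          constructor
          · rintro ⟨i, rfl | rfl | hi, hx⟩
            · exact Or.inr hx
            · exact Or.inl (Or.inr hx)
            · exact Or.inl (Or.inl ⟨i, hi, hx⟩)
          · rintro ((⟨i, hi, hx⟩ | hx) | hx)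
            · exact ⟨i, Or.inr (Or.inr hi), hx⟩
            · exact ⟨u, Or.inr (Or.inl rfl), hx⟩
            · exact ⟨v, Or.inl rfl, hx⟩
        have hcard : (insert v (insert u D)).card = D.card + 2 := by
          rw [Finset.card_insert_of_notMem (by simp [hvD, huv'.symm]),
            Finset.card_insert_of_notMem huD]
        have hvS : ∀ j ∈ S, ¬ Touch G (s v) (s j) := by
          rintro j hj ⟨a, ha, b, hb, hab⟩
          exact hvT ⟨a, ha, b, ⟨j, hSD hj, hb⟩, hab⟩
        have hbig : good (insert v (insert u D)) := by
          refine ⟨?_, by simp, ?_, insert v S, ?_, ?_, ?_⟩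
          · intro i hi
            simp only [Finset.mem_insert] at hi
            rcases hi with rfl | rfl | hi
            · exact hvA
            · exact hMA hu
            · exact hDA hi
          · rw [huni]
            obtain ⟨a, ha, b, hb, hab⟩ := huT
            obtain ⟨c, hcu, d, hdv, hcd⟩ := huv
            exact conn_union_adj (conn_union_adj hDc (hc u) hb ha hab.symm) (hc v)
              (Or.inr hcu) hdv hcd
          · exact Finset.insert_subset_insert _ (hSD.trans (Finset.subset_insert _ _))
          · intro i hi j hj hij
            rcases Finset.mem_insert.1 hi with rfl | hi'
            · rcases Finset.mem_insert.1 hj with rfl | hj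
              · exact absurd rfl hij
              · exact hvS j hj
            · rcases Finset.mem_insert.1 hj with rfl | hj
              · exact fun hh => hvS i hi' hh.symm
              · exact hSi i hi' j hj hij
          · rw [hcard, Finset.card_insert_of_notMem (fun hh => hvD (hSD hh))]
            omega
        have := hDmax _ hbig
        omega
      obtain ⟨S1, hS1, hS1i, hS1c⟩ := ih M m (by omega) (fun hh => hm (hh.mono hMA))
      obtain ⟨S2, hS2, hS2i, hS2c⟩ := ih (A \ M) m (by omega)
        (fun hh => hm (hh.mono Finset.sdiff_subset))
      have hdj : Disjoint S1 S2 := Finset.disjoint_left.2 fun a h1 h2 =>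
        (Finset.mem_sdiff.1 (hS2 h2)).2 (hS1 h1)
      refine ⟨S1 ∪ S2, Finset.union_subset (hS1.trans hMA) (hS2.trans Finset.sdiff_subset),
        ?_, ?_⟩
      · intro i hi j hj hij
        rcases Finset.mem_union.1 hi with hi | hi
        · rcases Finset.mem_union.1 hj with hj | hj
          · exact hS1i i hi j hj hij
          · exact hsep i (hS1 hi) j (hS2 hj)
        · rcases Finset.mem_union.1 hj with hj | hj
          · exact fun hh => hsep j (hS1 hj) i (hS2 hi) hh.symm
          · exact hS2i i hi j hj hij
      · rw [Finset.card_union_of_disjoint hdj, mul_add]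
        omega

theorem statement_12 (h k : ℕ) (G : SimpleGraph V) (X Y : Set V)
    (hminor : ¬ HasKMinor G h)
    (P : Fin k → PathPkg G)
    (hP : ∀ i, IsXYPath G X Y (P i))
    (hdisj : Pairwise fun i j => PkgDisjoint (P i) (P j)) :
    ∃ (n : ℕ) (Q : Fin n → PathPkg G),
      (k : ℝ) / (2 * ((h : ℝ) - 1)) ≤ (n : ℝ) ∧
      (∀ i, IsXYPath G X Y (Q i)) ∧
      Pairwise fun i j => PkgNonAdj G (Q i) (Q j) := by
  rcases h with _ | m
  · exact absurd ⟨fun i => i.elim0, fun i => i.elim0, fun i => i.elim0, fun i => i.elim0,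
      fun i => i.elim0⟩ hminor
  obtain ⟨S, -, hSi, hSc⟩ := duchet_meyniel G (fun i => pkgSupport (P i))
    (fun i => (P i).2.2.connected_induce_support) k Finset.univ m (by simp) (by
      rintro ⟨B, h1, h2, h3, h4, -⟩
      refine hminor ⟨fun i => unionOf (fun i => pkgSupport (P i)) (B i), ?_, h2, ?_, h4⟩
      · intro i
        obtain ⟨v, hv⟩ := h1 i
        exact ⟨(P v).1, v, hv, (P v).2.2.start_mem_support⟩
      · intro i j hij
        rw [Set.disjoint_left]
        rintro x ⟨a, ha, hxa⟩ ⟨b, hb, hxb⟩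
        have hab : a ≠ b := by
          rintro rfl
          exact Finset.disjoint_left.1 (h3 hij) ha hb
        exact hdisj hab x hxa hxb)
  refine ⟨S.card, fun i => P (S.equivFin.symm i), ?_, fun i => hP _, ?_⟩
  · have hk : (k : ℝ) ≤ 2 * m * S.card := by
      have : k ≤ 2 * m * S.card := by simpa using hSc
      exact_mod_cast this
    have e : 2 * (((m + 1 : ℕ) : ℝ) - 1) = 2 * m := by push_cast; ring
    rw [e]
    apply div_le_of_le_mul₀ (by positivity) (by positivity)
    linarith
  · intro i j hij a ha b hb
    have hne : (S.equivFin.symm i : Fin k) ≠ S.equivFin.symm j := fun hh =>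
      hij (S.equivFin.symm.injective (Subtype.ext hh))
    refine ⟨?_, fun hab => hSi _ (S.equivFin.symm i).2 _ (S.equivFin.symm j).2 hne
      ⟨a, ha, b, hb, hab⟩⟩
    rintro rfl
    exact hdisj hne a ha hb
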